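/- Let Q ∈ ℝ^{n×n} be symmetric positive definite with smallest eigenvalue λ₁ > 0, F ∈ ℂ^{m×m} invertible, and Yᵢ ∈ ℂ^{m×m} with max_i ‖F⁻¹Yᵢ‖ < λ₁. Then the matrix I + (Q ⊗ F)⁻¹ diag(Y₁,…,Yₙ) is invertible. -/

import Mathlib

open Matrix Kronecker

/-- Operator norm of a matrix induced by the Euclidean (ℓ²) norms,
i.e. the largest singular value. -/
noncomputable def opNorm {𝕜 : Type*} [RCLike 𝕜] {k n : Type*} [Fintype k] [Fintype n]
    [DecidableEq n] (M : Matrix k n 𝕜) : ℝ :=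
  ‖LinearMap.toContinuousLinearMap (Matrix.toEuclideanLin M)‖

/-!
Since `(Q ⊗ F)⁻¹ = (Q⁻¹ ⊗ 1) (1 ⊗ F⁻¹)` and `1 ⊗ F⁻¹` acts blockwise, the perturbation equals
`(Q⁻¹ ⊗ 1) diag(F⁻¹ Yᵢ)`. Its norm is at most `‖Q⁻¹‖ · maxᵢ ‖F⁻¹ Yᵢ‖`, because a block diagonal
matrix is no larger than its largest block and `Q⁻¹ ⊗ 1` is itself block diagonal with all blocks
`Q⁻¹`. As `‖Q⁻¹‖ ≤ 1 / λ₁`, the perturbation has norm `< 1` and the Neumann series applies.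
-/

open scoped Matrix.Norms.L2Operator

section Algebra

variable {R : Type*} [CommRing R] {k m n o p : Type*}

theorem blockDiagonal_mulVec_apply [Fintype n] [Fintype o] [DecidableEq o]
    (M : o → Matrix m n R) (v : n × o → R) (i : m) (j : o) :
    (blockDiagonal M *ᵥ v) (i, j) = (M j *ᵥ fun a => v (a, j)) i := by
  simp [mulVec, dotProduct, Fintype.sum_prod_type, blockDiagonal_apply, ite_mul]

theorem kronecker_mul_reindex_blockDiagonal [Fintype m] [Fintype n] [Fintype o]
    [DecidableEq m] [DecidableEq o]
    (A : Matrix k o R) (B : Matrix m n R) (Y : o → Matrix n p R) :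
    A ⊗ₖ B * reindex (.prodComm n o) (.prodComm p o) (blockDiagonal Y) =
      A ⊗ₖ (1 : Matrix m m R) *
        reindex (.prodComm m o) (.prodComm p o) (blockDiagonal fun j => B * Y j) := by
  have kronecker_eq : A ⊗ₖ B = A ⊗ₖ (1 : Matrix m m R) * (1 : Matrix o o R) ⊗ₖ B := by
    rw [← mul_kronecker_mul, Matrix.mul_one, Matrix.one_mul]
  rw [kronecker_eq, Matrix.mul_assoc, one_kronecker, blockDiagonal_mul]
  simp only [reindex_apply, submatrix_mul_equiv]

theorem spectrum_map_algebraMap {S : Type*} [CommRing S] [Algebra R S]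
    [IsLocalHom (algebraMap R S)] [Fintype n] [DecidableEq n] (M : Matrix n n R) :
    spectrum R (M.map (algebraMap R S)) = spectrum R M := by
  ext x
  have resolvent_eq : algebraMap R (Matrix n n S) x - M.map (algebraMap R S) =
      (algebraMap R S).mapMatrix (algebraMap R (Matrix n n R) x - M) := by
    ext i j
    by_cases h : i = j <;> simp [h, algebraMap_matrix_apply]
  rw [spectrum.mem_iff, spectrum.mem_iff, resolvent_eq, isUnit_iff_isUnit_det,
    ← RingHom.map_det, isUnit_map_iff, isUnit_iff_isUnit_det]

end Algebra

section NormedRing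

variable {R : Type*} [NormedRing R]

theorem isUnit_one_add_of_norm_lt_one [HasSummableGeomSeries R] {x : R} (h : ‖x‖ < 1) :
    IsUnit (1 + x) := by
  rw [← sub_neg_eq_add]
  exact isUnit_one_sub_of_norm_lt_one (by rwa [norm_neg])

theorem norm_units_inv_le_of_le_norm_spectrum [StarRing R] [NormedAlgebra ℝ R]
    [IsometricContinuousFunctionalCalculus ℝ R IsSelfAdjoint] {u : Rˣ}
    (hu : IsSelfAdjoint (u : R)) {c : ℝ} (hc : 0 < c)
    (h : ∀ x ∈ spectrum ℝ (u : R), c ≤ ‖x‖) : ‖(↑u⁻¹ : R)‖ ≤ c⁻¹ := by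
  rw [← cfc_inv_id (R := ℝ) u hu]
  refine norm_cfc_le (inv_nonneg.2 hc.le) fun x hx => ?_
  rw [norm_inv]
  exact inv_anti₀ hc (h x hx)

end NormedRing

section L2OpNorm

variable {𝕜 : Type*} [RCLike 𝕜] {k l m n o : Type*} [Fintype k] [Fintype l] [Fintype m]
  [Fintype n] [Fintype o]

theorem norm_toLp_prod_sq (v : m × o → 𝕜) :
    ‖WithLp.toLp 2 v‖ ^ 2 = ∑ j, ‖WithLp.toLp 2 fun i => v (i, j)‖ ^ 2 := by
  simp only [EuclideanSpace.norm_sq_eq, Fintype.sum_prod_type_right]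

variable [DecidableEq n]

theorem opNorm_eq_l2_opNorm (M : Matrix m n 𝕜) : opNorm M = ‖M‖ := rfl

theorem l2_opNorm_le_bound (M : Matrix m n 𝕜) {C : ℝ} (hC : 0 ≤ C)
    (h : ∀ v : n → 𝕜, ‖WithLp.toLp 2 (M *ᵥ v)‖ ≤ C * ‖WithLp.toLp 2 v‖) : ‖M‖ ≤ C :=
  ContinuousLinearMap.opNorm_le_bound _ hC fun x => h x.ofLp

theorem l2_opNorm_reindex_le [DecidableEq l] (e : m ≃ k) (f : n ≃ l) (M : Matrix m n 𝕜) :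
    ‖reindex e f M‖ ≤ ‖M‖ := by
  refine l2_opNorm_le_bound _ (norm_nonneg M) fun v => ?_
  calc ‖WithLp.toLp 2 (reindex e f M *ᵥ v)‖
      = ‖WithLp.toLp 2 (M *ᵥ (v ∘ f))‖ := by
        rw [reindex_apply, submatrix_mulVec_equiv, f.symm_symm]
        exact (LinearIsometryEquiv.piLpCongrLeft 2 𝕜 𝕜 e).norm_map (WithLp.toLp 2 (M *ᵥ (v ∘ f)))
    _ ≤ ‖M‖ * ‖WithLp.toLp 2 (v ∘ f)‖ := l2_opNorm_mulVec M (WithLp.toLp 2 (v ∘ f))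
    _ = ‖M‖ * ‖WithLp.toLp 2 v‖ :=
        congrArg (‖M‖ * ·)
          ((LinearIsometryEquiv.piLpCongrLeft 2 𝕜 𝕜 f.symm).norm_map (WithLp.toLp 2 v))

variable [DecidableEq o]

/-- On the right, `‖M‖` is the sup norm of the family `M`. -/
theorem l2_opNorm_blockDiagonal_le (M : o → Matrix m n 𝕜) : ‖blockDiagonal M‖ ≤ ‖M‖ := by
  refine l2_opNorm_le_bound _ (norm_nonneg M) fun v => ?_
  have block_le (j : o) : ‖WithLp.toLp 2 (M j *ᵥ fun i => v (i, j))‖ ≤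
      ‖M‖ * ‖WithLp.toLp 2 fun i => v (i, j)‖ :=
    (l2_opNorm_mulVec (M j) (WithLp.toLp 2 fun i => v (i, j))).trans
      (by gcongr; exact norm_le_pi_norm M j)
  refine (sq_le_sq₀ (by positivity) (by positivity)).mp ?_
  simp only [mul_pow, norm_toLp_prod_sq, blockDiagonal_mulVec_apply, Finset.mul_sum]
  gcongr with j
  rw [← mul_pow]
  gcongr
  exact block_le j

theorem l2_opNorm_kronecker_one_le (A : Matrix m n 𝕜) :
    ‖A ⊗ₖ (1 : Matrix o o 𝕜)‖ ≤ ‖A‖ := by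
  rw [kronecker_one]
  exact (l2_opNorm_blockDiagonal_le _).trans (pi_norm_const_le A)

theorem l2_opNorm_kronecker_mul_reindex_blockDiagonal_le
    (A : Matrix k o 𝕜) (B : Matrix m l 𝕜) (Y : o → Matrix l n 𝕜) :
    ‖A ⊗ₖ B * reindex (.prodComm l o) (.prodComm n o) (blockDiagonal Y)‖ ≤
      ‖A‖ * ‖fun j => B * Y j‖ := by
  classical
  rw [kronecker_mul_reindex_blockDiagonal]
  refine (l2_opNorm_mul _ _).trans ?_
  gcongr
  · exact l2_opNorm_kronecker_one_le A
  · exact (l2_opNorm_reindex_le _ _ _).trans (l2_opNorm_blockDiagonal_le _)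

theorem l2_opNorm_inv_map_ofReal_le {Q : Matrix n n ℝ} (hQ : Q.IsHermitian) {c : ℝ}
    (hc : 0 < c) (h : ∀ i, c ≤ ‖hQ.eigenvalues i‖) :
    ‖(Q.map (algebraMap ℝ ℂ))⁻¹‖ ≤ c⁻¹ := by
  have le_norm_spectrum : ∀ x ∈ spectrum ℝ (Q.map (algebraMap ℝ ℂ)), c ≤ ‖x‖ := by
    rw [spectrum_map_algebraMap, hQ.spectrum_real_eq_range_eigenvalues]
    exact Set.forall_mem_range.2 h
  have isUnit_map : IsUnit (Q.map (algebraMap ℝ ℂ)) :=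
    spectrum.isUnit_of_zero_notMem ℝ fun h0 =>
      (hc.trans_le (le_norm_spectrum 0 h0)).ne' norm_zero
  obtain ⟨u, hu⟩ := isUnit_map
  have isSelfAdjoint : IsSelfAdjoint (u : Matrix n n ℂ) := by
    rw [hu]
    exact hQ.map _ algebraMap_star_comm
  rw [← hu, ← coe_units_inv]
  rw [← hu] at le_norm_spectrum
  exact norm_units_inv_le_of_le_norm_spectrum isSelfAdjoint hc le_norm_spectrum

end L2OpNorm

/-- Here `A` and `B` play the roles of `Q⁻¹` and `F⁻¹`. -/
theorem stmt_15_general {𝕜 : Type*} [RCLike 𝕜] {n m p : Type*} [Fintype n] [DecidableEq n]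
    [Fintype m] [DecidableEq m] [Fintype p]
    (A : Matrix n n 𝕜) (B : Matrix m p 𝕜) (Y : n → Matrix p m 𝕜)
    (h : ∀ i, opNorm A * opNorm (B * Y i) < 1) :
    IsUnit (1 + A ⊗ₖ B *
      reindex (Equiv.prodComm p n) (Equiv.prodComm m n) (blockDiagonal Y)) := by
  have : CompleteSpace (Matrix (n × m) (n × m) 𝕜) := FiniteDimensional.complete 𝕜 _
  simp only [opNorm_eq_l2_opNorm] at h
  refine isUnit_one_add_of_norm_lt_one ?_
  calc ‖A ⊗ₖ B * reindex (Equiv.prodComm p n) (Equiv.prodComm m n) (blockDiagonal Y)‖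
      ≤ ‖A‖ * ‖fun i => B * Y i‖ := l2_opNorm_kronecker_mul_reindex_blockDiagonal_le A B Y
    _ = ‖(‖A‖ : 𝕜) • fun i => B * Y i‖ := by rw [norm_smul, RCLike.norm_ofReal, abs_norm]
    _ < 1 := (pi_norm_lt_iff one_pos).2 fun i => by
        rw [Pi.smul_apply, norm_smul, RCLike.norm_ofReal, abs_norm]
        exact h i

/-- If max_i ‖F⁻¹Yᵢ‖ < λ₁, then I + (Q ⊗ F)⁻¹ diag(Y₁,…,Yₙ) is invertible. -/
theorem stmt_15 {n m : Type*} [Fintype n] [DecidableEq n] [Nonempty n]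
    [Fintype m] [DecidableEq m] [Nonempty m]
    (Q : Matrix n n ℝ) (hQ : Q.IsHermitian) (hPD : Q.PosDef)
    (lam1 : ℝ) (hlam_pos : 0 < lam1)
    (hmem : ∃ i, hQ.eigenvalues i = lam1)
    (hlb : ∀ i, lam1 ≤ hQ.eigenvalues i)
    (F : Matrix m m ℂ) (hF : IsUnit F.det)
    (Y : n → Matrix m m ℂ)
    (hY : ∀ i, opNorm (F⁻¹ * Y i) < lam1) :
    IsUnit (1 + ((Q.map (fun x : ℝ => (x : ℂ))) ⊗ₖ F)⁻¹ * Matrix.reindex (Equiv.prodComm m n) (Equiv.prodComm m n) (Matrix.blockDiagonal Y)) := by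
  have opNorm_inv_le : opNorm (Q.map fun x : ℝ => (x : ℂ))⁻¹ ≤ lam1⁻¹ :=
    (opNorm_eq_l2_opNorm _).trans_le <|
      l2_opNorm_inv_map_ofReal_le hQ hlam_pos fun i => (hlb i).trans (le_abs_self _)
  rw [inv_kronecker]
  exact stmt_15_general _ _ _ fun i =>
    (mul_le_mul_of_nonneg_right opNorm_inv_le (norm_nonneg _)).trans_lt
      ((inv_mul_lt_one₀ hlam_pos).2 (hY i))
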